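/- arXiv:math/0005188 — 3 statements merged into one kernel-verified Lean document; each statement's English description precedes it below -/
import Mathlib

section
/- Let U ⊆ E be open and let φ : E → ℝ satisfy ContDiffOn ℝ 2 φ U. Then the following are equivalent: (i) φ is a critical point of the Dirichlet energy under compactly supported variations, i.e. for every test function ψ on U the function t ↦ ∫ x in tsupport ψ, ‖∇φ x + t • ∇ψ x‖^2 has derivative 0 at t = 0 (HasDerivAt _ 0 0); (ii) Δφ x = 0 for every x ∈ U. -/
open MeasureTheory RealInnerProductSpace

/-- The product of a function continuous on `U` and a continuous function with compact support
inside `U` is integrable. -/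
theorem ContinuousOn.integrable_mul_of_tsupport_subset {X : Type*} [TopologicalSpace X]
    [T2Space X] [MeasurableSpace X] [OpensMeasurableSpace X] {μ : Measure X}
    [IsFiniteMeasureOnCompacts μ] {U : Set X} {f g : X → ℝ} (hf : ContinuousOn f U)
    (hg : Continuous g) (hgc : HasCompactSupport g) (hgU : tsupport g ⊆ U) :
    Integrable (fun x => f x * g x) μ := by
  have h : IntegrableOn (fun x => f x * g x) (tsupport g) μ :=
    ((hf.mono hgU).mul hg.continuousOn).integrableOn_compact' hgc (isClosed_tsupport g).measurableSet
  refine (integrableOn_iff_integrable_of_support_subset fun x hx => ?_).1 h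
  by_contra hxg
  exact hx (by simp [image_eq_zero_of_notMem_tsupport hxg])

/-- The first variation at `t = 0` of `t ↦ ∫ x in K, ‖a x + t • b x‖ ^ 2` is
`2 * ∫ x in K, ⟪a x, b x⟫`. -/
theorem hasDerivAt_setIntegral_norm_add_smul_sq {X F : Type*} [TopologicalSpace X] [T2Space X]
    [MeasurableSpace X] [OpensMeasurableSpace X] {μ : Measure X} [IsFiniteMeasureOnCompacts μ]
    [NormedAddCommGroup F] [InnerProductSpace ℝ F] {K : Set X} (hK : IsCompact K) {a b : X → F}
    (ha : ContinuousOn a K) (hb : ContinuousOn b K) :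
    HasDerivAt (fun t : ℝ => ∫ x in K, ‖a x + t • b x‖ ^ 2 ∂μ)
      (2 * ∫ x in K, ⟪a x, b x⟫ ∂μ) 0 := by
  have hm := hK.isClosed.measurableSet
  have hA : IntegrableOn (fun x => ‖a x‖ ^ 2) K μ := (ha.norm.pow 2).integrableOn_compact' hK hm
  have hAB : IntegrableOn (fun x => ⟪a x, b x⟫) K μ := (ha.inner hb).integrableOn_compact' hK hm
  have hB : IntegrableOn (fun x => ‖b x‖ ^ 2) K μ := (hb.norm.pow 2).integrableOn_compact' hK hm
  have hsum (t : ℝ) : IntegrableOn (fun x => ‖a x‖ ^ 2 + t * (2 * ⟪a x, b x⟫)) K μ :=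
    hA.add ((hAB.const_mul 2).const_mul t)
  have key : (fun t : ℝ => ∫ x in K, ‖a x + t • b x‖ ^ 2 ∂μ) = fun t : ℝ =>
      (∫ x in K, ‖a x‖ ^ 2 ∂μ) + t * (2 * ∫ x in K, ⟪a x, b x⟫ ∂μ)
        + t ^ 2 * ∫ x in K, ‖b x‖ ^ 2 ∂μ := by
    funext t
    rw [← integral_const_mul, ← integral_const_mul, ← integral_const_mul,
      ← integral_add hA ((hAB.const_mul 2).const_mul t),
      ← integral_add (hsum t) (hB.const_mul (t ^ 2))]
    refine integral_congr_ae (.of_forall fun x => ?_)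
    simp only [norm_add_sq_real, inner_smul_right, norm_smul, mul_pow, Real.norm_eq_abs, sq_abs]
    ring
  rw [key]
  simpa using (((hasDerivAt_id (0 : ℝ)).mul_const (2 * ∫ x in K, ⟪a x, b x⟫ ∂μ)).const_add
    (∫ x in K, ‖a x‖ ^ 2 ∂μ)).fun_add (((hasDerivAt_id (0 : ℝ)).pow 2).mul_const
      (∫ x in K, ‖b x‖ ^ 2 ∂μ))

theorem ContDiffOn.fderiv_apply_const {F : Type*} [NormedAddCommGroup F] [NormedSpace ℝ F]
    {V : Set F} {f : F → ℝ} (hf : ContDiffOn ℝ 2 f V) (hV : IsOpen V) (v : F) :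
    ContDiffOn ℝ 1 (fun y => fderiv ℝ f y v) V :=
  (hf.fderiv_of_isOpen hV (by norm_num)).clm_apply contDiffOn_const

theorem ContDiffOn.continuousOn_gradient {F : Type*} [NormedAddCommGroup F]
    [InnerProductSpace ℝ F] [CompleteSpace F] {V : Set F} {f : F → ℝ} (hf : ContDiffOn ℝ 1 f V)
    (hV : IsOpen V) : ContinuousOn (gradient f) V :=
  (InnerProductSpace.toDual ℝ F).symm.continuous.comp_continuousOn
    (hf.continuousOn_fderiv_of_isOpen hV le_rfl)

section EuclideanSpace

variable {ι : Type*} [Fintype ι] [DecidableEq ι] {U : Set (EuclideanSpace ℝ ι)}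
  {φ ψ : EuclideanSpace ℝ ι → ℝ}

theorem inner_gradient_eq_sum_fderiv_single (x : EuclideanSpace ℝ ι) :
    ⟪gradient φ x, gradient ψ x⟫ =
      ∑ i, fderiv ℝ φ x (EuclideanSpace.single i (1 : ℝ)) *
        fderiv ℝ ψ x (EuclideanSpace.single i (1 : ℝ)) := by
  simp only [← inner_gradient_left, PiLp.inner_apply]
  simp [mul_comm]

theorem ContDiffOn.continuousOn_sum_fderiv_fderiv_single (hφ : ContDiffOn ℝ 2 φ U)
    (hU : IsOpen U) :
    ContinuousOn (fun x => ∑ i, fderiv ℝ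
      (fun y => fderiv ℝ φ y (EuclideanSpace.single i (1 : ℝ))) x
        (EuclideanSpace.single i (1 : ℝ))) U :=
  continuousOn_finsetSum _ fun _ _ =>
    ((hφ.fderiv_apply_const hU _).continuousOn_fderiv_of_isOpen hU le_rfl).clm_apply
      continuousOn_const

/-- **Green's first identity** for a compactly supported test function. -/
theorem setIntegral_tsupport_inner_gradient_eq (hU : IsOpen U) (hφ : ContDiffOn ℝ 2 φ U)
    (hψ : ContDiff ℝ 1 ψ) (hψc : HasCompactSupport ψ) (hψU : tsupport ψ ⊆ U) :
    ∫ x in tsupport ψ, ⟪gradient φ x, gradient ψ x⟫ =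
      -∫ x, ψ x * ∑ i, fderiv ℝ (fun y => fderiv ℝ φ y (EuclideanSpace.single i (1 : ℝ))) x
        (EuclideanSpace.single i (1 : ℝ)) := by
  have hd (i : ι) := hφ.fderiv_apply_const hU (EuclideanSpace.single i (1 : ℝ))
  have hdd (i : ι) : ContinuousOn (fun x => fderiv ℝ
      (fun y => fderiv ℝ φ y (EuclideanSpace.single i (1 : ℝ))) x
        (EuclideanSpace.single i (1 : ℝ))) U :=
    ((hd i).continuousOn_fderiv_of_isOpen hU le_rfl).clm_apply continuousOn_const
  have hψ' (i : ι) : Continuous fun x => fderiv ℝ ψ x (EuclideanSpace.single i (1 : ℝ)) :=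
    (hψ.continuous_fderiv one_ne_zero).clm_apply continuous_const
  have hsub (i : ι) : tsupport (fun x => fderiv ℝ ψ x (EuclideanSpace.single i (1 : ℝ))) ⊆
      tsupport ψ := tsupport_fderiv_apply_subset ℝ _
  have hint (i : ι) : Integrable fun x => fderiv ℝ φ x (EuclideanSpace.single i (1 : ℝ)) *
      fderiv ℝ ψ x (EuclideanSpace.single i (1 : ℝ)) :=
    (hd i).continuousOn.integrable_mul_of_tsupport_subset (hψ' i)
      (hψc.fderiv_apply ℝ _) ((hsub i).trans hψU)
  have hint' (i : ι) := (hdd i).integrable_mul_of_tsupport_subset (μ := volume)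
    hψ.continuous hψc hψU
  rw [setIntegral_eq_integral_of_forall_compl_eq_zero fun x hx => ?_]
  · simp_rw [inner_gradient_eq_sum_fderiv_single, Finset.mul_sum, mul_comm (ψ _)]
    rw [integral_finsetSum _ fun i _ => hint i, integral_finsetSum _ fun i _ => hint' i,
      ← Finset.sum_neg_distrib]
    refine Finset.sum_congr rfl fun i _ => ?_
    exact integral_mul_fderiv_eq_neg_fderiv_mul_of_integrable (hint' i) (hint i)
      ((hd i).continuousOn.integrable_mul_of_tsupport_subset hψ.continuous hψc hψU)
      (fun x hx => ((hd i).differentiableOn one_ne_zero).differentiableAt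
        (hU.mem_nhds (hψU hx)))
      fun x _ => hψ.differentiable one_ne_zero x
  · have : fderiv ℝ ψ x = 0 :=
      image_eq_zero_of_notMem_tsupport fun h => hx (tsupport_fderiv_subset ℝ h)
    simp [gradient, this]

/-- The first variation of the Dirichlet energy in the direction of a test function. -/
theorem hasDerivAt_dirichletEnergy (hU : IsOpen U) (hφ : ContDiffOn ℝ 2 φ U)
    (hψ : ContDiff ℝ 1 ψ) (hψc : HasCompactSupport ψ) (hψU : tsupport ψ ⊆ U) :
    HasDerivAt (fun t : ℝ => ∫ x in tsupport ψ, ‖gradient φ x + t • gradient ψ x‖ ^ 2)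
      (2 * -∫ x, ψ x * ∑ i, fderiv ℝ
        (fun y => fderiv ℝ φ y (EuclideanSpace.single i (1 : ℝ))) x
          (EuclideanSpace.single i (1 : ℝ))) 0 := by
  rw [← setIntegral_tsupport_inner_gradient_eq hU hφ hψ hψc hψU]
  exact hasDerivAt_setIntegral_norm_add_smul_sq hψc
    (((hφ.of_le (by norm_num)).continuousOn_gradient hU).mono hψU)
    ((hψ.contDiffOn.continuousOn_gradient isOpen_univ).mono (Set.subset_univ _))

end EuclideanSpace

theorem stmt_5 (n : ℕ) (hn : 1 ≤ n) (U : Set (EuclideanSpace ℝ (Fin n))) (hU : IsOpen U)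
    (φ : EuclideanSpace ℝ (Fin n) → ℝ) (hφ : ContDiffOn ℝ 2 φ U) :
    (∀ ψ : EuclideanSpace ℝ (Fin n) → ℝ, ContDiff ℝ (⊤ : ℕ∞) ψ → HasCompactSupport ψ →
        tsupport ψ ⊆ U →
        HasDerivAt (fun t : ℝ => ∫ x in tsupport ψ, ‖gradient φ x + t • gradient ψ x‖ ^ 2)
          0 0) ↔
      (∀ x ∈ U, (∑ i : Fin n,
          fderiv ℝ (fun y => fderiv ℝ φ y (EuclideanSpace.single i (1:ℝ))) x
            (EuclideanSpace.single i (1:ℝ))) = 0) := by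
  have hle : (1 : WithTop ℕ∞) ≤ ((⊤ : ℕ∞) : WithTop ℕ∞) := by exact_mod_cast le_top
  have hcont := hφ.continuousOn_sum_fderiv_fderiv_single hU
  constructor
  · intro h
    have hae := hU.ae_eq_zero_of_integral_contDiff_smul_eq_zero
      (hcont.locallyIntegrableOn hU.measurableSet (μ := volume)) fun ψ hψ hψc hψU => by
        have := (hasDerivAt_dirichletEnergy hU hφ (hψ.of_le hle) hψc hψU).unique
          (h ψ hψ hψc hψU)
        simpa only [smul_eq_mul, mul_eq_zero, two_ne_zero, false_or, neg_eq_zero] using this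
    exact Measure.eqOn_open_of_ae_eq ((ae_restrict_iff' hU.measurableSet).2 hae) hU hcont
      continuousOn_const
  · intro h ψ hψ hψc hψU
    have hzero : ∀ x, ψ x * ∑ i : Fin n,
        fderiv ℝ (fun y => fderiv ℝ φ y (EuclideanSpace.single i (1 : ℝ))) x
          (EuclideanSpace.single i (1 : ℝ)) = 0 := fun x => by
      by_cases hx : x ∈ tsupport ψ
      · rw [h x (hψU hx), mul_zero]
      · rw [image_eq_zero_of_notMem_tsupport hx, zero_mul]
    simpa only [hzero, integral_zero, neg_zero, mul_zero] using
      hasDerivAt_dirichletEnergy hU hφ (hψ.of_le hle) hψc hψU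
end

section
/- Let U ⊆ E be an open convex set and let a : E → E be a vector field with ContDiffOn ℝ 1 a U. Then there exists a harmonic potential for a on U, i.e. a function φ : E → ℝ such that HasGradientAt φ (a x) x for every x ∈ U and Δφ x = 0 for every x ∈ U, if and only if for every x ∈ U one has both ∂_i a_j x = ∂_j a_i x for all i j : Fin n (skew closedness) and div a x = 0 (direct closedness). -/
open MeasureTheory RealInnerProductSpace

section

variable {E : Type*} [NormedAddCommGroup E] [InnerProductSpace ℝ E] {a : E → E} {x : E}

/-- The 1-form dual to a differentiable vector field is differentiable. -/
theorem hasFDerivAt_innerSL_comp (ha : DifferentiableAt ℝ a x) :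
    HasFDerivAt (fun y => innerSL ℝ (a y)) ((innerSL ℝ : E →L[ℝ] E →L[ℝ] ℝ) ∘L fderiv ℝ a x) x :=
  (innerSL ℝ : E →L[ℝ] E →L[ℝ] ℝ).hasFDerivAt.comp x ha.hasFDerivAt

theorem fderiv_inner_const_right (ha : DifferentiableAt ℝ a x) (u v : E) :
    fderiv ℝ (fun y => ⟪a y, v⟫) x u = ⟪fderiv ℝ a x u, v⟫ := by
  rw [fderiv_inner_apply ℝ ha (differentiableAt_const v)]
  simp

/-- If `φ` has gradient `a` near `x` and `a` is differentiable at `x`, then the derivative of `a`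
at `x` is symmetric. -/
theorem inner_fderiv_symm_of_hasGradientAt [CompleteSpace E] {φ : E → ℝ}
    (hφ : ∀ᶠ y in nhds x, HasGradientAt φ (a y) y) (ha : DifferentiableAt ℝ a x) (u v : E) :
    ⟪fderiv ℝ a x u, v⟫ = ⟪fderiv ℝ a x v, u⟫ := by
  have hφ' : ∀ᶠ y in nhds x, HasFDerivAt φ (innerSL ℝ (a y)) y :=
    hφ.mono fun y hy => hy.hasFDerivAt
  exact second_derivative_symmetric_of_eventually hφ' (hasFDerivAt_innerSL_comp ha) u v

/-- The second partial derivatives of a potential are the partial derivatives of its gradient. -/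
theorem fderiv_fderiv_apply_of_hasGradientAt [CompleteSpace E] {φ : E → ℝ}
    (hφ : ∀ᶠ y in nhds x, HasGradientAt φ (a y) y) (v : E) :
    fderiv ℝ (fun y => fderiv ℝ φ y v) x = fderiv ℝ (fun y => ⟪a y, v⟫) x := by
  refine Filter.EventuallyEq.fderiv_eq (hφ.mono fun y hy => ?_)
  simp [hy.hasFDerivAt.fderiv]

/-- A differentiable vector field with symmetric derivative on an open convex set is a gradient. -/
theorem exists_hasGradientAt_of_inner_fderiv_symm [CompleteSpace E] {U : Set E}
    (hUopen : IsOpen U) (hUconv : Convex ℝ U) (ha : DifferentiableOn ℝ a U)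
    (hsymm : ∀ x ∈ U, ∀ u v, ⟪fderiv ℝ a x u, v⟫ = ⟪fderiv ℝ a x v, u⟫) :
    ∃ φ : E → ℝ, ∀ x ∈ U, HasGradientAt φ (a x) x := by
  have hω : ∀ x ∈ U, HasFDerivAt (fun y => innerSL ℝ (a y))
      ((innerSL ℝ : E →L[ℝ] E →L[ℝ] ℝ) ∘L fderiv ℝ a x) x := fun x hx =>
    hasFDerivAt_innerSL_comp (ha.differentiableAt (hUopen.mem_nhds hx))
  obtain ⟨φ, hφ⟩ := hUconv.exists_forall_hasFDerivAt_of_fderiv_symmetric hUopen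
    (fun x hx => (hω x hx).differentiableAt.differentiableWithinAt)
    (fun x hx u v => by rw [(hω x hx).fderiv]; exact hsymm x hx u v)
  exact ⟨φ, fun x hx => (hφ x hx :)⟩

end

/-- An operator on Euclidean space is symmetric as soon as its matrix is. -/
theorem EuclideanSpace.inner_apply_symm_of_single {ι : Type*} [Fintype ι] [DecidableEq ι]
    (L : EuclideanSpace ℝ ι →L[ℝ] EuclideanSpace ℝ ι)
    (h : ∀ i j, ⟪L (EuclideanSpace.single i (1:ℝ)), EuclideanSpace.single j (1:ℝ)⟫ =
      ⟪L (EuclideanSpace.single j (1:ℝ)), EuclideanSpace.single i (1:ℝ)⟫)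
    (u v : EuclideanSpace ℝ ι) : ⟪L u, v⟫ = ⟪L v, u⟫ := by
  have key : (innerₗ (EuclideanSpace ℝ ι)) ∘ₗ (L : EuclideanSpace ℝ ι →ₗ[ℝ] EuclideanSpace ℝ ι) =
      ((innerₗ (EuclideanSpace ℝ ι)) ∘ₗ
        (L : EuclideanSpace ℝ ι →ₗ[ℝ] EuclideanSpace ℝ ι)).flip := by
    refine (EuclideanSpace.basisFun ι ℝ).toBasis.ext fun i =>
      (EuclideanSpace.basisFun ι ℝ).toBasis.ext fun j => ?_
    simp only [OrthonormalBasis.coe_toBasis, EuclideanSpace.basisFun_apply]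
    exact h i j
  exact LinearMap.congr_fun₂ key u v

theorem stmt_7 (n : ℕ) (hn : 1 ≤ n) (U : Set (EuclideanSpace ℝ (Fin n)))
    (hUopen : IsOpen U) (hUconv : Convex ℝ U)
    (a : EuclideanSpace ℝ (Fin n) → EuclideanSpace ℝ (Fin n))
    (ha : ContDiffOn ℝ 1 a U) :
    (∃ φ : EuclideanSpace ℝ (Fin n) → ℝ,
        (∀ x ∈ U, HasGradientAt φ (a x) x) ∧
        (∀ x ∈ U, (∑ i : Fin n,
          fderiv ℝ (fun y => fderiv ℝ φ y (EuclideanSpace.single i (1:ℝ))) x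
            (EuclideanSpace.single i (1:ℝ))) = 0)) ↔
      (∀ x ∈ U,
        (∀ i j : Fin n,
          fderiv ℝ (fun y => ⟪a y, EuclideanSpace.single j (1:ℝ)⟫) x
              (EuclideanSpace.single i (1:ℝ)) =
            fderiv ℝ (fun y => ⟪a y, EuclideanSpace.single i (1:ℝ)⟫) x
              (EuclideanSpace.single j (1:ℝ))) ∧
        (∑ i : Fin n,
          fderiv ℝ (fun y => ⟪a y, EuclideanSpace.single i (1:ℝ)⟫) x
            (EuclideanSpace.single i (1:ℝ))) = 0) := by
  have hdiff : DifferentiableOn ℝ a U := ha.differentiableOn one_ne_zero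
  have hdiffAt : ∀ x ∈ U, DifferentiableAt ℝ a x := fun x hx =>
    hdiff.differentiableAt (hUopen.mem_nhds hx)
  constructor
  · rintro ⟨φ, hφ, hΔ⟩ x hx
    have hφx := Filter.eventually_of_mem (hUopen.mem_nhds hx) hφ
    refine ⟨fun i j => ?_, ?_⟩
    · rw [fderiv_inner_const_right (hdiffAt x hx), fderiv_inner_const_right (hdiffAt x hx)]
      exact inner_fderiv_symm_of_hasGradientAt hφx (hdiffAt x hx) _ _
    · simpa only [fderiv_fderiv_apply_of_hasGradientAt hφx] using hΔ x hx
  · intro h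
    obtain ⟨φ, hφ⟩ := exists_hasGradientAt_of_inner_fderiv_symm hUopen hUconv hdiff
      fun x hx => EuclideanSpace.inner_apply_symm_of_single _ fun i j => by
        simpa only [fderiv_inner_const_right (hdiffAt x hx)] using (h x hx).1 i j
    refine ⟨φ, hφ, fun x hx => ?_⟩
    have hφx := Filter.eventually_of_mem (hUopen.mem_nhds hx) hφ
    simpa only [fderiv_fderiv_apply_of_hasGradientAt hφx] using (h x hx).2
end

section
/- Let U ⊆ E be open, let φ : E → ℝ satisfy ContDiffOn ℝ 2 φ U, and assume the gradient has constant nonzero norm on U: there is c > 0 with ‖∇φ x‖ = c for all x ∈ U. Then the following are equivalent: (i) φ is a critical point of the total-norm functional under compactly supported variations, i.e. for every test function ψ on U the function t ↦ ∫ x in tsupport ψ, ‖∇φ x + t • ∇ψ x‖ has derivative 0 at t = 0 (HasDerivAt _ 0 0); (ii) φ satisfies the Laplace equation on U: Δφ x = 0 for every x ∈ U. -/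
open MeasureTheory RealInnerProductSpace

/-- The norm is differentiable along a line through a nonzero vector. -/
theorem hasDerivAt_norm_add_smul {F : Type*} [NormedAddCommGroup F] [InnerProductSpace ℝ F]
    {v : F} (hv : v ≠ 0) (w : F) :
    HasDerivAt (fun t : ℝ => ‖v + t • w‖) (⟪v, w⟫ / ‖v‖) 0 := by
  have hline : HasDerivAt (fun t : ℝ => v + t • w) w 0 := by
    simpa using ((hasDerivAt_id (0 : ℝ)).smul_const w).const_add v
  have hsqrt := hline.norm_sq.sqrt (by simpa using hv)
  simp only [Real.sqrt_sq (norm_nonneg _), zero_smul, add_zero] at hsqrt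
  rwa [mul_div_mul_left _ _ two_ne_zero] at hsqrt

/-- First variation of the total norm over a compact set on which the field does not vanish. -/
theorem hasDerivAt_setIntegral_norm_add_smul {X F : Type*} [TopologicalSpace X] [T2Space X]
    [MeasurableSpace X] [BorelSpace X] [NormedAddCommGroup F] [InnerProductSpace ℝ F]
    {μ : Measure X} [IsFiniteMeasureOnCompacts μ] {K : Set X} (hK : IsCompact K)
    {v w : X → F} (hv : ContinuousOn v K) (hw : ContinuousOn w K) (hv0 : ∀ x ∈ K, v x ≠ 0) :
    HasDerivAt (fun t : ℝ => ∫ x in K, ‖v x + t • w x‖ ∂μ)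
      (∫ x in K, ⟪v x, w x⟫ / ‖v x‖ ∂μ) 0 := by
  have hadd (t : ℝ) : ContinuousOn (fun x => ‖v x + t • w x‖) K :=
    (hv.add (hw.const_smul t)).norm
  refine (hasDerivAt_integral_of_dominated_loc_of_lip (bound := fun x => ‖w x‖)
    Filter.univ_mem (.of_forall fun t => ((hadd t).integrableOn_compact hK).aestronglyMeasurable)
    ((hadd 0).integrableOn_compact hK) ?_ (.of_forall fun x => ?_)
    (hw.norm.integrableOn_compact hK) ?_).2
  · exact (((hv.inner hw).div hv.norm fun x hx => norm_ne_zero_iff.2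
      (hv0 x hx)).integrableOn_compact hK).aestronglyMeasurable
  · refine LipschitzOnWith.of_dist_le_mul fun s _ t _ => ?_
    calc |‖v x + s • w x‖ - ‖v x + t • w x‖| ≤ ‖(v x + s • w x) - (v x + t • w x)‖ :=
          abs_norm_sub_norm_le _ _
      _ = ‖(s - t) • w x‖ := by rw [add_sub_add_left_eq_sub, sub_smul]
      _ = _ := by simp [norm_smul, Real.dist_eq, mul_comm]
  · filter_upwards [ae_restrict_mem hK.measurableSet] with x hx
    exact hasDerivAt_norm_add_smul (hv0 x hx) (w x)

/-- A product is integrable when one factor is compactly supported inside a set on which both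
factors are continuous. -/
theorem integrable_mul_of_continuousOn_of_tsupport_subset {X : Type*} [TopologicalSpace X]
    [T2Space X] [MeasurableSpace X] [BorelSpace X] {μ : Measure X} [IsFiniteMeasureOnCompacts μ]
    {K U : Set X} (hK : IsCompact K) (hKU : K ⊆ U) {f g : X → ℝ} (hf : ContinuousOn f U)
    (hg : Continuous g) (hgK : tsupport g ⊆ K) : Integrable (fun x => f x * g x) μ := by
  rw [← integrableOn_iff_integrable_of_support_subset (s := K)]
  · exact ((hf.mono hKU).mul hg.continuousOn).integrableOn_compact hK
  · exact (Function.support_mul_subset_right f g).trans ((subset_tsupport g).trans hgK)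

section Gradient

variable {n : ℕ} {U : Set (EuclideanSpace ℝ (Fin n))} {φ ψ : EuclideanSpace ℝ (Fin n) → ℝ}

theorem inner_gradient_gradient_eq_sum (x : EuclideanSpace ℝ (Fin n)) :
    ⟪gradient φ x, gradient ψ x⟫ = ∑ i, fderiv ℝ φ x (EuclideanSpace.single i 1) *
      fderiv ℝ ψ x (EuclideanSpace.single i 1) := by
  rw [← (EuclideanSpace.basisFun (Fin n) ℝ).sum_inner_mul_inner]
  simp

theorem continuousOn_gradient (hU : IsOpen U) (hφ : ContDiffOn ℝ 1 φ U) :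
    ContinuousOn (gradient φ) U :=
  (InnerProductSpace.toDual ℝ _).symm.continuous.comp_continuousOn
    (hφ.continuousOn_fderiv_of_isOpen hU le_rfl)

theorem contDiffOn_fderiv_apply (hU : IsOpen U) (hφ : ContDiffOn ℝ 2 φ U)
    (v : EuclideanSpace ℝ (Fin n)) : ContDiffOn ℝ 1 (fun y => fderiv ℝ φ y v) U :=
  (hφ.fderiv_of_isOpen hU (by norm_num)).clm_apply contDiffOn_const

theorem continuousOn_fderiv_fderiv_apply (hU : IsOpen U) (hφ : ContDiffOn ℝ 2 φ U)
    (v : EuclideanSpace ℝ (Fin n)) :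
    ContinuousOn (fun x => fderiv ℝ (fun y => fderiv ℝ φ y v) x v) U :=
  ((contDiffOn_fderiv_apply hU hφ v).continuousOn_fderiv_of_isOpen hU le_rfl).clm_apply
    continuousOn_const

/-- Green's first identity against a compactly supported function. -/
theorem integral_inner_gradient_eq_neg_integral_mul_laplacian (hU : IsOpen U)
    (hφ : ContDiffOn ℝ 2 φ U) (hψ : ContDiff ℝ 1 ψ) (hψc : HasCompactSupport ψ)
    (hψU : tsupport ψ ⊆ U) :
    ∫ x, ⟪gradient φ x, gradient ψ x⟫ = -∫ x, ψ x * ∑ i,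
      fderiv ℝ (fun y => fderiv ℝ φ y (EuclideanSpace.single i (1 : ℝ))) x
        (EuclideanSpace.single i (1 : ℝ)) := by
  have hd (i : Fin n) := contDiffOn_fderiv_apply hU hφ (EuclideanSpace.single i 1)
  have hdψ (i : Fin n) :
      Integrable fun x => fderiv ℝ φ x (EuclideanSpace.single i 1) *
        fderiv ℝ ψ x (EuclideanSpace.single i 1) :=
    integrable_mul_of_continuousOn_of_tsupport_subset hψc hψU (hd i).continuousOn
      ((hψ.continuous_fderiv one_ne_zero).clm_apply continuous_const)
      (tsupport_fderiv_apply_subset ℝ _)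
  have hddψ (i : Fin n) :
      Integrable fun x => fderiv ℝ (fun y => fderiv ℝ φ y (EuclideanSpace.single i (1 : ℝ))) x
        (EuclideanSpace.single i (1 : ℝ)) * ψ x :=
    integrable_mul_of_continuousOn_of_tsupport_subset hψc hψU
      (continuousOn_fderiv_fderiv_apply hU hφ _) hψ.continuous subset_rfl
  simp_rw [inner_gradient_gradient_eq_sum, mul_comm (ψ _), Finset.sum_mul]
  rw [integral_finsetSum _ fun i _ => hdψ i, integral_finsetSum _ fun i _ => hddψ i,
    ← Finset.sum_neg_distrib]
  refine Finset.sum_congr rfl fun i _ => ?_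
  refine integral_mul_fderiv_eq_neg_fderiv_mul_of_integrable (hddψ i) (hdψ i) ?_ ?_ ?_
  · exact integrable_mul_of_continuousOn_of_tsupport_subset hψc hψU (hd i).continuousOn
      hψ.continuous subset_rfl
  · exact fun x hx => ((hd i).differentiableOn one_ne_zero).differentiableAt
      (hU.mem_nhds (hψU hx))
  · exact fun x _ => hψ.differentiable one_ne_zero x

/-- First variation of the total norm of a gradient of constant nonzero norm. -/
theorem hasDerivAt_setIntegral_norm_gradient_add_smul (hU : IsOpen U) (hφ : ContDiffOn ℝ 2 φ U)
    {c : ℝ} (hc : 0 < c) (hconst : ∀ x ∈ U, ‖gradient φ x‖ = c)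
    (hψ : ContDiff ℝ 1 ψ) (hψc : HasCompactSupport ψ) (hψU : tsupport ψ ⊆ U) :
    HasDerivAt (fun t : ℝ => ∫ x in tsupport ψ, ‖gradient φ x + t • gradient ψ x‖)
      (-(∫ x, ψ x * ∑ i,
        fderiv ℝ (fun y => fderiv ℝ φ y (EuclideanSpace.single i (1 : ℝ))) x
          (EuclideanSpace.single i (1 : ℝ))) / c) 0 := by
  have hvar := hasDerivAt_setIntegral_norm_add_smul (μ := volume) hψc.isCompact
    ((continuousOn_gradient hU (hφ.of_le (by norm_num))).mono hψU)
    ((continuousOn_gradient isOpen_univ hψ.contDiffOn).mono (Set.subset_univ _))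
    (fun x hx => norm_ne_zero_iff.1 (by rw [hconst x (hψU hx)]; exact hc.ne'))
  convert! hvar using 1
  rw [← integral_inner_gradient_eq_neg_integral_mul_laplacian hU hφ hψ hψc hψU,
    ← integral_div, ← setIntegral_eq_integral_of_forall_compl_eq_zero (s := tsupport ψ)]
  · exact setIntegral_congr_fun (isClosed_tsupport ψ).measurableSet fun x hx => by
      simp only [hconst x (hψU hx)]
  · intro x hx
    have : fderiv ℝ ψ x = 0 :=
      image_eq_zero_of_notMem_tsupport fun h => hx (tsupport_fderiv_subset ℝ h)
    simp [gradient, this]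

end Gradient

theorem stmt_13 (n : ℕ) (hn : 1 ≤ n) (U : Set (EuclideanSpace ℝ (Fin n))) (hU : IsOpen U)
    (φ : EuclideanSpace ℝ (Fin n) → ℝ) (hφ : ContDiffOn ℝ 2 φ U)
    (c : ℝ) (hc : 0 < c) (hconst : ∀ x ∈ U, ‖gradient φ x‖ = c) :
    (∀ ψ : EuclideanSpace ℝ (Fin n) → ℝ, ContDiff ℝ (⊤ : ℕ∞) ψ → HasCompactSupport ψ →
        tsupport ψ ⊆ U →
        HasDerivAt (fun t : ℝ => ∫ x in tsupport ψ, ‖gradient φ x + t • gradient ψ x‖) 0 0) ↔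
      (∀ x ∈ U, (∑ i : Fin n,
          fderiv ℝ (fun y => fderiv ℝ φ y (EuclideanSpace.single i (1:ℝ))) x
            (EuclideanSpace.single i (1:ℝ))) = 0) := by
  have hvar (ψ : EuclideanSpace ℝ (Fin n) → ℝ) (hψ : ContDiff ℝ (⊤ : ℕ∞) ψ) :=
    hasDerivAt_setIntegral_norm_gradient_add_smul hU hφ hc hconst
      (hψ.of_le (by exact_mod_cast le_top))
  constructor
  · intro hcrit
    have hcont : ContinuousOn (fun x => ∑ i : Fin n,
        fderiv ℝ (fun y => fderiv ℝ φ y (EuclideanSpace.single i (1:ℝ))) x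
          (EuclideanSpace.single i (1:ℝ))) U :=
      continuousOn_finsetSum _ fun i _ => continuousOn_fderiv_fderiv_apply hU hφ _
    have hae := hU.ae_eq_zero_of_integral_contDiff_smul_eq_zero (μ := volume)
      (hcont.locallyIntegrableOn hU.measurableSet) fun ψ hψ hψc hψU => by
        have huniq := (hvar ψ hψ hψc hψU).unique (hcrit ψ hψ hψc hψU)
        simpa [hc.ne'] using huniq
    exact Measure.eqOn_open_of_ae_eq ((ae_restrict_iff' hU.measurableSet).2 hae) hU hcont
      continuousOn_const
  · intro hharm ψ hψ hψc hψU
    convert hvar ψ hψ hψc hψU using 1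
    rw [integral_eq_zero_of_ae, neg_zero, zero_div]
    refine .of_forall fun x => ?_
    by_cases hx : x ∈ tsupport ψ
    · simp [hharm x (hψU hx)]
    · simp [image_eq_zero_of_notMem_tsupport hx]
end
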